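/- For every real number q with 0 < q < 1, ∫_0^q ∏_{j=1}^∞ (1−t^{3j})^{10} / (1−t^j)^6 dt = q ∏_{j=1}^∞ (1−q^{9j})^3 / (1−q^j)^3. Moreover this common value equals 1/(3√3) when q = e^{−2π/3}. -/

import Mathlib

open Real

/-- The integrand `∏_{j=1}^∞ (1−t^{3j})^{10} / (1−t^j)^6`. -/
noncomputable def U5 (t : ℝ) : ℝ :=
  ∏' j : ℕ, (1 - t ^ (3 * (j + 1))) ^ 10 / (1 - t ^ (j + 1)) ^ 6

/-- The antiderivative `q ∏_{j=1}^∞ (1−q^{9j})^3 / (1−q^j)^3`. -/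
noncomputable def V5 (q : ℝ) : ℝ :=
  q * ∏' j : ℕ, (1 - q ^ (9 * (j + 1))) ^ 3 / (1 - q ^ (j + 1)) ^ 3

/-!
Write `φ q = ∏ (1 - q ^ j)`. The derivative of `q φ(q⁹)³ / φ(q)³` is `φ(q⁹)³ / φ(q)³` times the
Eisenstein series `1 + 3 S(q) - 27 S(q⁹)` with `S(q) = ∑ qⁿ / (1 - qⁿ)²`, so the integral formula
amounts to `(1 + 3 S(q) - 27 S(q⁹)) φ(q)³ φ(q⁹)³ = φ(q³)¹⁰`.

A product `θ(x y) θ(x / y)` of theta functions is a two-term bilinear expression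
`a(x) b(y) - b(x) a(y)` (split the double sum by parity), so these products satisfy the Plücker
relation. This is Weierstrass' three-term relation; differentiating it at a confluent point shows
that `θ(x y) θ(x / y)` is, up to elementary factors, `θ(x)² θ(y)²` times the difference of the
values of `℘` at `x` and `y`. At nome `q³`, with `x` a primitive cube root of unity and `y = q`,
all theta values collapse to `φ(q)`, `φ(q³)` and `φ(q⁹)`, and the difference of `℘`-values is the
Eisenstein series above. For the special value, `q φ(q⁹)³ / φ(q)³ = (η(9 τ) / η(τ))³` where
`q = e^{2πiτ}`, and the inversion formula relates `η(3i)` to `η(i/3)`.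
-/

open Filter Finset Topology

section QBinomial

variable {R : Type*} [CommRing R]

/-- The finite `q`-Pochhammer symbol `(x; Q)_n`. -/
def qPochhammer (Q x : R) (n : ℕ) : R := ∏ k ∈ range n, (1 - x * Q ^ k)

/-- The Gaussian binomial coefficient `[n choose k]_Q`, defined by the `Q`-Pascal recursion so that
no division is needed. -/
def qChoose (Q : R) : ℕ → ℕ → R
  | _, 0 => 1
  | 0, _ + 1 => 0
  | n + 1, k + 1 => qChoose Q n k + Q ^ (k + 1) * qChoose Q n (k + 1)

theorem qPochhammer_zero (Q x : R) : qPochhammer Q x 0 = 1 := prod_range_zero _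

theorem qPochhammer_succ (Q x : R) (n : ℕ) :
    qPochhammer Q x (n + 1) = qPochhammer Q x n * (1 - x * Q ^ n) := prod_range_succ _ n

theorem qPochhammer_succ' (Q x : R) (n : ℕ) :
    qPochhammer Q x (n + 1) = (1 - x) * qPochhammer Q (x * Q) n := by
  rw [qPochhammer, prod_range_succ', pow_zero, mul_one, mul_comm, qPochhammer]
  simp only [pow_succ', mul_assoc]

theorem qChoose_zero_right (Q : R) (n : ℕ) : qChoose Q n 0 = 1 := by cases n <;> rfl

theorem qChoose_succ_succ (Q : R) (n k : ℕ) :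
    qChoose Q (n + 1) (k + 1) = qChoose Q n k + Q ^ (k + 1) * qChoose Q n (k + 1) := rfl

theorem qChoose_eq_zero_of_lt (Q : R) {n k : ℕ} (h : n < k) : qChoose Q n k = 0 := by
  induction n generalizing k with
  | zero => obtain ⟨k, rfl⟩ := Nat.exists_eq_succ_of_ne_zero h.ne'; rfl
  | succ n ih =>
    obtain ⟨k, rfl⟩ := Nat.exists_eq_succ_of_ne_zero (Nat.ne_zero_of_lt h)
    rw [qChoose_succ_succ, ih (by omega), ih (by omega), mul_zero, add_zero]

theorem qChoose_self (Q : R) (n : ℕ) : qChoose Q n n = 1 := by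
  induction n with
  | zero => rfl
  | succ n ih =>
    rw [qChoose_succ_succ, ih, qChoose_eq_zero_of_lt Q n.lt_succ_self, mul_zero, add_zero]

theorem qChoose_add_mul_qPochhammer (Q : R) (a b : ℕ) :
    qChoose Q (a + b) a * (qPochhammer Q Q a * qPochhammer Q Q b) = qPochhammer Q Q (a + b) := by
  induction a generalizing b with
  | zero => simp [qChoose_zero_right, qPochhammer_zero]
  | succ a iha =>
    induction b with
    | zero => simp [qChoose_self, qPochhammer_zero]
    | succ b ihb =>
      have pascal_left := iha (b + 1)
      rw [show a + 1 + b = a + (b + 1) by ring] at ihb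
      rw [show a + 1 + (b + 1) = a + (b + 1) + 1 by ring, qChoose_succ_succ]
      simp only [qPochhammer_succ Q Q a, qPochhammer_succ Q Q b,
        qPochhammer_succ Q Q (a + (b + 1))] at pascal_left ihb ⊢
      linear_combination (1 - Q ^ (a + 1)) * pascal_left
        + Q ^ (a + 1) * (1 - Q ^ (b + 1)) * ihb

theorem qPochhammer_eq_sum (Q x : R) (n : ℕ) :
    qPochhammer Q x n = ∑ j ∈ range (n + 1), qChoose Q n j * (Q ^ j.choose 2 * (-x) ^ j) := by
  induction n generalizing x with
  | zero => simp [qPochhammer_zero, qChoose_zero_right]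
  | succ n ih =>
    have pascal (j : ℕ) : qChoose Q (n + 1) (j + 1) * (Q ^ (j + 1).choose 2 * (-x) ^ (j + 1)) =
        -x * (qChoose Q n j * (Q ^ j.choose 2 * (-(x * Q)) ^ j)) +
          qChoose Q n (j + 1) * (Q ^ (j + 1).choose 2 * (-(x * Q)) ^ (j + 1)) := by
      rw [qChoose_succ_succ, Nat.choose_succ_succ' j 1, Nat.choose_one_right]
      ring
    have extend := sum_range_succ'
      (fun j ↦ qChoose Q n j * (Q ^ j.choose 2 * (-(x * Q)) ^ j)) (n + 1)
    rw [sum_range_succ, qChoose_eq_zero_of_lt Q n.lt_succ_self, ← ih] at extend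
    rw [qPochhammer_succ', sum_range_succ', sum_congr rfl fun j _ ↦ pascal j, sum_add_distrib,
      ← mul_sum, ← ih]
    simp only [qChoose_zero_right] at extend ⊢
    linear_combination extend

end QBinomial

/-- The general term of the theta series; the exponent `n (n - 1) / 2` is an exact quotient. -/
noncomputable def thetaTerm {K : Type*} [Field K] (Q x : K) (n : ℤ) : K :=
  Q ^ (n * (n - 1) / 2) * (-x) ^ n

theorem two_mul_mul_pred_ediv_two (n : ℤ) : 2 * (n * (n - 1) / 2) = n * (n - 1) :=
  Int.mul_ediv_cancel' (Int.even_mul_pred_self n).two_dvd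

theorem two_mul_choose_two (n : ℕ) : (2 : ℤ) * n.choose 2 = n * (n - 1) := by
  qify
  rw [Nat.cast_choose_two]
  ring

section FiniteTripleProduct

variable {K : Type*} [Field K] {Q x : K}

theorem qPochhammer_div_pow_two_mul (hQ : Q ≠ 0) (hx : x ≠ 0) (N : ℕ) :
    qPochhammer Q (x / Q ^ N) (2 * N) =
      (-x) ^ N / Q ^ (N + 1).choose 2 * (qPochhammer Q x N * qPochhammer Q (Q / x) N) := by
  induction N with
  | zero => simp [qPochhammer_zero]
  | succ N ih =>
    have shift : x / Q ^ (N + 1) * Q = x / Q ^ N := by rw [pow_succ]; field_simp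
    rw [show 2 * (N + 1) = 2 * N + 1 + 1 by ring, qPochhammer_succ', shift, qPochhammer_succ, ih,
      qPochhammer_succ Q x, qPochhammer_succ Q (Q / x), Nat.choose_succ_succ' (N + 1) 1,
      Nat.choose_one_right]
    field_simp
    ring

theorem mul_thetaTerm_natCast_sub (hQ : Q ≠ 0) (hx : x ≠ 0) (j N : ℕ) :
    (-x) ^ N / Q ^ (N + 1).choose 2 * thetaTerm Q x (j - N) =
      Q ^ j.choose 2 * (-(x / Q ^ N)) ^ j := by
  have exponent : ((j : ℤ) - N) * (j - N - 1) / 2 =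
      ((j.choose 2 + (N + 1).choose 2 : ℕ) : ℤ) - (N * j : ℕ) := by
    have hj := two_mul_choose_two j
    have hN := two_mul_choose_two (N + 1)
    have := two_mul_mul_pred_ediv_two ((j : ℤ) - N)
    push_cast at hN ⊢
    linarith
  rw [thetaTerm, exponent, zpow_sub₀ hQ, zpow_sub₀ (neg_ne_zero.2 hx)]
  simp only [zpow_natCast, neg_pow (x / Q ^ N), neg_pow x, div_pow, ← pow_mul, pow_add]
  field_simp

theorem qPochhammer_mul_qPochhammer_div (hQ : Q ≠ 0) (hx : x ≠ 0) (N : ℕ) :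
    qPochhammer Q x N * qPochhammer Q (Q / x) N =
      ∑ j ∈ range (2 * N + 1), qChoose Q (2 * N) j * thetaTerm Q x (j - N) := by
  have scale_ne_zero : (-x) ^ N / Q ^ (N + 1).choose 2 ≠ 0 := by simp [hQ, hx]
  refine mul_left_cancel₀ scale_ne_zero ?_
  rw [← qPochhammer_div_pow_two_mul hQ hx, qPochhammer_eq_sum, mul_sum]
  refine sum_congr rfl fun j _ ↦ ?_
  rw [← mul_thetaTerm_natCast_sub hQ hx, mul_left_comm]

end FiniteTripleProduct

section TripleProduct

variable {Q x y : ℂ}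

/-- The infinite `q`-Pochhammer symbol `(x; Q)_∞`. -/
noncomputable def qPochhammerInf (Q x : ℂ) : ℂ := ∏' n : ℕ, (1 - x * Q ^ n)

/-- Euler's function `(q; q)_∞`, whose value at `q = e^{2πiτ}` is `q^{-1/24} η(τ)`. -/
noncomputable def eulerProd (q : ℂ) : ℂ := ∏' n : ℕ, (1 - q ^ (n + 1))

/-- The theta series `∑ (-1)^n Q^{n(n-1)/2} x^n`, normalised so that it vanishes exactly when `x` is
an integral power of `Q`. -/
noncomputable def theta (Q x : ℂ) : ℂ := ∑' n : ℤ, thetaTerm Q x n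

theorem summable_norm_neg_mul_pow (x : ℂ) (hQ : ‖Q‖ < 1) :
    Summable fun n : ℕ ↦ ‖-(x * Q ^ n)‖ := by
  simp only [norm_neg, norm_mul, norm_pow]
  exact (summable_geometric_of_lt_one (norm_nonneg _) hQ).mul_left _

theorem multipliable_one_sub_mul_pow (x : ℂ) (hQ : ‖Q‖ < 1) :
    Multipliable fun n : ℕ ↦ 1 - x * Q ^ n := by
  simpa only [sub_eq_add_neg] using
    multipliable_one_add_of_summable (summable_norm_neg_mul_pow x hQ)

theorem tendsto_qPochhammer (x : ℂ) (hQ : ‖Q‖ < 1) :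
    Tendsto (qPochhammer Q x) atTop (𝓝 (qPochhammerInf Q x)) :=
  (multipliable_one_sub_mul_pow x hQ).hasProd.tendsto_prod_nat

theorem qPochhammerInf_self (q : ℂ) : qPochhammerInf q q = eulerProd q := by
  simp only [qPochhammerInf, eulerProd, pow_succ']

theorem one_sub_ne_zero_of_norm_lt_one {u : ℂ} (hu : ‖u‖ < 1) : 1 - u ≠ 0 :=
  sub_ne_zero.2 fun h ↦ by simp [← h] at hu

theorem norm_pow_lt_one {q : ℂ} (hq : ‖q‖ < 1) {n : ℕ} (hn : n ≠ 0) : ‖q ^ n‖ < 1 := by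
  rw [norm_pow]
  exact pow_lt_one₀ (norm_nonneg q) hq hn

theorem eulerProd_ne_zero {q : ℂ} (hq : ‖q‖ < 1) : eulerProd q ≠ 0 := by
  have := tprod_one_add_ne_zero_of_summable (f := fun n : ℕ ↦ -(q * q ^ n))
    (fun n ↦ by
      simpa only [← sub_eq_add_neg, ← pow_succ'] using
        one_sub_ne_zero_of_norm_lt_one (norm_pow_lt_one hq n.succ_ne_zero))
    (summable_norm_neg_mul_pow q hq)
  simpa only [eulerProd, pow_succ', sub_eq_add_neg] using this

theorem qPochhammer_self_ne_zero (hQ : ‖Q‖ < 1) (n : ℕ) : qPochhammer Q Q n ≠ 0 :=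
  prod_ne_zero_iff.2 fun k _ ↦ by
    rw [← pow_succ']
    exact one_sub_ne_zero_of_norm_lt_one (norm_pow_lt_one hQ k.succ_ne_zero)

theorem tendsto_qPochhammer_self (hQ : ‖Q‖ < 1) :
    Tendsto (qPochhammer Q Q) atTop (𝓝 (eulerProd Q)) :=
  qPochhammerInf_self Q ▸ tendsto_qPochhammer Q hQ

theorem qChoose_add_eq_mul_inv (hQ : ‖Q‖ < 1) (a b : ℕ) :
    qChoose Q (a + b) a =
      qPochhammer Q Q (a + b) * ((qPochhammer Q Q a)⁻¹ * (qPochhammer Q Q b)⁻¹) := by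
  rw [← qChoose_add_mul_qPochhammer, ← mul_inv, mul_inv_cancel_right₀
    (mul_ne_zero (qPochhammer_self_ne_zero hQ a) (qPochhammer_self_ne_zero hQ b))]

theorem exists_norm_qChoose_le (hQ : ‖Q‖ < 1) : ∃ B, ∀ n k, ‖qChoose Q n k‖ ≤ B := by
  have lim := tendsto_qPochhammer_self hQ
  obtain ⟨C, hC⟩ := (Metric.isBounded_range_of_tendsto _ lim).exists_norm_le
  obtain ⟨D, hD⟩ :=
    (Metric.isBounded_range_of_tendsto _ (lim.inv₀ (eulerProd_ne_zero hQ))).exists_norm_le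
  have poch_le (n : ℕ) : ‖qPochhammer Q Q n‖ ≤ C := hC _ ⟨n, rfl⟩
  have inv_le (n : ℕ) : ‖(qPochhammer Q Q n)⁻¹‖ ≤ D := hD _ ⟨n, rfl⟩
  have C_nonneg : 0 ≤ C := (norm_nonneg _).trans (poch_le 0)
  have D_nonneg : 0 ≤ D := (norm_nonneg _).trans (inv_le 0)
  refine ⟨C * (D * D), fun n k ↦ ?_⟩
  rcases lt_or_ge n k with hnk | hkn
  · rw [qChoose_eq_zero_of_lt Q hnk, norm_zero]
    positivity
  · obtain ⟨l, rfl⟩ := Nat.exists_eq_add_of_le hkn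
    rw [qChoose_add_eq_mul_inv hQ, norm_mul, norm_mul]
    gcongr
    exacts [poch_le _, inv_le _, inv_le _]

theorem tendsto_qChoose_two_mul (hQ : ‖Q‖ < 1) (n : ℤ) :
    Tendsto (fun N : ℕ ↦ qChoose Q (2 * N) (N + n).toNat) atTop (𝓝 (eulerProd Q)⁻¹) := by
  have lim := tendsto_qPochhammer_self hQ
  have lim_inv := lim.inv₀ (eulerProd_ne_zero hQ)
  have tendsto_shift (m : ℤ) : Tendsto (fun N : ℕ ↦ (N + m).toNat) atTop atTop :=
    tendsto_atTop.2 fun b ↦ by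
      filter_upwards [eventually_ge_atTop (b + m.natAbs)] with N hN
      omega
  have quotient := (lim.comp (tendsto_id.const_mul_atTop' two_pos)).mul
    ((lim_inv.comp (tendsto_shift n)).mul (lim_inv.comp (tendsto_shift (-n))))
  rw [mul_inv_cancel_left₀ (eulerProd_ne_zero hQ)] at quotient
  refine quotient.congr' ?_
  filter_upwards [eventually_ge_atTop n.natAbs] with N hN
  have split : 2 * N = (N + n).toNat + (N + -n).toNat := by omega
  simp only [Function.comp_apply, id_eq, split, qChoose_add_eq_mul_inv hQ]

theorem zpow_eq_exp_mul_log {z : ℂ} (hz : z ≠ 0) (n : ℤ) :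
    z ^ n = Complex.exp (n * Complex.log z) := by
  rw [Complex.exp_int_mul, Complex.exp_log hz]

theorem summable_thetaTerm (hQ₀ : Q ≠ 0) (hQ : ‖Q‖ < 1) (hx : x ≠ 0) :
    Summable (thetaTerm Q x) := by
  set τ : ℂ := Complex.log Q / (2 * π * Complex.I) with hτ
  set z : ℂ := (Complex.log (-x) - Complex.log Q / 2) / (2 * π * Complex.I) with hz
  have im_pos : 0 < τ.im := by
    have im_eq : τ.im = (2 * π)⁻¹ * -Real.log ‖Q‖ := by
      have : τ = ((2 * π)⁻¹ : ℝ) * (-Complex.I * Complex.log Q) := by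
        rw [hτ]
        push_cast
        field_simp
        simp
      simp [this, Complex.log_re]
    have := Real.log_neg (norm_pos_iff.2 hQ₀) hQ
    rw [im_eq]
    exact mul_pos (by positivity) (neg_pos.2 this)
  refine ((summable_jacobiTheta₂_term_iff z τ).2 im_pos).congr fun n ↦ ?_
  have exponent : ((n * (n - 1) / 2 : ℤ) : ℂ) = n * (n - 1) / 2 := by
    rw [eq_div_iff two_ne_zero, mul_comm]
    exact_mod_cast two_mul_mul_pred_ediv_two n
  rw [thetaTerm, jacobiTheta₂_term, zpow_eq_exp_mul_log hQ₀, zpow_eq_exp_mul_log (neg_ne_zero.2 hx),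
    ← Complex.exp_add, exponent, hz, hτ]
  congr 1
  field_simp
  ring

theorem sum_qChoose_mul_thetaTerm (Q x : ℂ) (N : ℕ) :
    ∑ j ∈ range (2 * N + 1), qChoose Q (2 * N) j * thetaTerm Q x (j - N) =
      ∑' n : ℤ, (if -N ≤ n then qChoose Q (2 * N) (N + n).toNat else 0) * thetaTerm Q x n := by
  rw [tsum_eq_sum (s := Icc (-N : ℤ) N)]
  · refine sum_nbij' (fun j ↦ (j : ℤ) - N) (fun n ↦ (N + n).toNat) ?_ ?_ ?_ ?_ ?_ <;>
      simp only [mem_range, mem_Icc]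
    · omega
    · omega
    · omega
    · omega
    · intro j _
      rw [if_pos (by omega), add_sub_cancel, Int.toNat_natCast]
  · intro n hn
    rw [mem_Icc, not_and, not_le] at hn
    split_ifs with hn'
    · rw [qChoose_eq_zero_of_lt Q (by have := hn hn'; omega), zero_mul]
    · exact zero_mul _

theorem jacobi_triple_product (hQ₀ : Q ≠ 0) (hQ : ‖Q‖ < 1) (hx : x ≠ 0) :
    theta Q x = eulerProd Q * (qPochhammerInf Q x * qPochhammerInf Q (Q / x)) := by
  obtain ⟨B, norm_qChoose_le⟩ := exists_norm_qChoose_le hQ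
  have B_nonneg : 0 ≤ B := (norm_nonneg _).trans (norm_qChoose_le 0 0)
  have tendsto_theta : Tendsto (fun N ↦ qPochhammer Q x N * qPochhammer Q (Q / x) N) atTop
      (𝓝 (∑' n, (eulerProd Q)⁻¹ * thetaTerm Q x n)) := by
    simp only [qPochhammer_mul_qPochhammer_div hQ₀ hx, sum_qChoose_mul_thetaTerm]
    refine tendsto_tsum_of_dominated_convergence
      ((summable_thetaTerm hQ₀ hQ hx).norm.mul_left B) (fun n ↦ ?_) (.of_forall fun N n ↦ ?_)
    · refine ((tendsto_qChoose_two_mul hQ n).congr' ?_).mul_const _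
      filter_upwards [eventually_ge_atTop n.natAbs] with N hN
      rw [if_pos (by omega)]
    · rw [norm_mul]
      gcongr
      split_ifs
      exacts [norm_qChoose_le _ _, norm_zero.trans_le B_nonneg]
  have := tendsto_nhds_unique tendsto_theta
    ((tendsto_qPochhammer x hQ).mul (tendsto_qPochhammer (Q / x) hQ))
  rw [← this, tsum_mul_left, mul_inv_cancel_left₀ (eulerProd_ne_zero hQ), theta]

end TripleProduct

theorem tsum_int_prod_eq_add {E : Type*} [AddCommGroup E] [UniformSpace E] [IsUniformAddGroup E]
    [CompleteSpace E] [T2Space E] {F : ℤ × ℤ → E} (hF : Summable F) :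
    ∑' p, F p = ∑' p : ℤ × ℤ, F (p.1 + p.2, p.1 - p.2) +
      ∑' p : ℤ × ℤ, F (p.1 + p.2, p.1 - p.2 + 1) := by
  have even_inj : Function.Injective fun p : ℤ × ℤ ↦ (p.1 + p.2, p.1 - p.2) := by
    rintro ⟨a, b⟩ ⟨c, d⟩ h
    simp only [Prod.mk.injEq] at h ⊢
    omega
  have odd_inj : Function.Injective fun p : ℤ × ℤ ↦ (p.1 + p.2, p.1 - p.2 + 1) := by
    rintro ⟨a, b⟩ ⟨c, d⟩ h
    simp only [Prod.mk.injEq] at h ⊢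
    omega
  have parity : IsCompl (Set.range fun p : ℤ × ℤ ↦ (p.1 + p.2, p.1 - p.2))
      (Set.range fun p : ℤ × ℤ ↦ (p.1 + p.2, p.1 - p.2 + 1)) := by
    refine ⟨Set.disjoint_left.2 ?_, codisjoint_iff.2 (Set.eq_univ_of_forall ?_)⟩
    · rintro _ ⟨⟨a, b⟩, rfl⟩ ⟨⟨c, d⟩, h⟩
      simp only [Prod.mk.injEq] at h
      omega
    · rintro ⟨m, n⟩
      rcases Int.even_or_odd' (m - n) with ⟨k, hk | hk⟩
      · exact Or.inl ⟨(m - k, k), by simp only [Prod.mk.injEq]; omega⟩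
      · exact Or.inr ⟨(m - k - 1, k + 1), by simp only [Prod.mk.injEq]; omega⟩
  exact (HasSum.add_isCompl parity
    (even_inj.hasSum_range_iff.2 (hF.comp_injective even_inj).hasSum)
    (odd_inj.hasSum_range_iff.2 (hF.comp_injective odd_inj).hasSum)).tsum_eq

section ThetaTerm

variable {K : Type*} [Field K] {Q x y : K}

theorem thetaTerm_sq_neg_sq (Q x : K) (n : ℤ) :
    thetaTerm (Q ^ 2) (-x ^ 2) n = Q ^ (n * (n - 1)) * x ^ (2 * n) := by
  rw [← two_mul_mul_pred_ediv_two n, thetaTerm, neg_neg, zpow_mul, zpow_mul, zpow_ofNat, zpow_ofNat]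

theorem thetaTerm_sq_neg_mul_sq (hQ : Q ≠ 0) (x : K) (n : ℤ) :
    thetaTerm (Q ^ 2) (-(Q * x ^ 2)) n = Q ^ (n * n) * x ^ (2 * n) := by
  have := thetaTerm_sq_neg_sq Q x n
  rw [thetaTerm, neg_neg] at this ⊢
  rw [mul_zpow, mul_left_comm, this, ← mul_assoc, ← zpow_add₀ hQ]
  ring_nf

theorem thetaTerm_mul_thetaTerm_div (hQ : Q ≠ 0) (hx : x ≠ 0) (hy : y ≠ 0) (m n : ℤ) :
    thetaTerm Q (x * y) m * thetaTerm Q (x / y) n =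
      Q ^ (m * (m - 1) / 2 + n * (n - 1) / 2) * ((-x) ^ (m + n) * y ^ (m - n)) := by
  rw [thetaTerm, thetaTerm, ← neg_mul, ← neg_div, mul_zpow, div_zpow, zpow_add₀ hQ,
    zpow_add₀ (neg_ne_zero.2 hx), zpow_sub₀ hy]
  ring

theorem thetaTerm_mul_thetaTerm_even (hQ : Q ≠ 0) (hx : x ≠ 0) (hy : y ≠ 0) (a b : ℤ) :
    thetaTerm Q (x * y) (a + b) * thetaTerm Q (x / y) (a - b) =
      thetaTerm (Q ^ 2) (-x ^ 2) a * thetaTerm (Q ^ 2) (-(Q * y ^ 2)) b := by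
  have exponent : (a + b) * (a + b - 1) / 2 + (a - b) * (a - b - 1) / 2 = a * (a - 1) + b * b := by
    linarith [two_mul_mul_pred_ediv_two (a + b), two_mul_mul_pred_ediv_two (a - b)]
  rw [thetaTerm_mul_thetaTerm_div hQ hx hy, exponent, show a + b + (a - b) = 2 * a by ring,
    show a + b - (a - b) = 2 * b by ring, (even_two_mul a).neg_zpow, thetaTerm_sq_neg_sq,
    thetaTerm_sq_neg_mul_sq hQ, zpow_add₀ hQ]
  ring

theorem thetaTerm_mul_thetaTerm_odd (hQ : Q ≠ 0) (hx : x ≠ 0) (hy : y ≠ 0) (a b : ℤ) :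
    thetaTerm Q (x * y) (a + b) * thetaTerm Q (x / y) (a - b + 1) =
      -(x / y) * (thetaTerm (Q ^ 2) (-(Q * x ^ 2)) a * thetaTerm (Q ^ 2) (-y ^ 2) b) := by
  have exponent : (a + b) * (a + b - 1) / 2 + (a - b + 1) * (a - b + 1 - 1) / 2 =
      a * a + b * (b - 1) := by
    linarith [two_mul_mul_pred_ediv_two (a + b), two_mul_mul_pred_ediv_two (a - b + 1)]
  rw [thetaTerm_mul_thetaTerm_div hQ hx hy, exponent,
    show a + b + (a - b + 1) = 2 * a + 1 by ring, show a + b - (a - b + 1) = 2 * b - 1 by ring,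
    zpow_add_one₀ (neg_ne_zero.2 hx), (even_two_mul a).neg_zpow, zpow_sub_one₀ hy,
    thetaTerm_sq_neg_sq, thetaTerm_sq_neg_mul_sq hQ, zpow_add₀ hQ]
  ring

end ThetaTerm

section Weierstrass

variable {Q x y u v : ℂ}

theorem summable_thetaTerm_mul_thetaTerm {P : ℂ} (hP₀ : P ≠ 0) (hP : ‖P‖ < 1) (hQ₀ : Q ≠ 0)
    (hQ : ‖Q‖ < 1) (hx : x ≠ 0) (hy : y ≠ 0) :
    Summable fun p : ℤ × ℤ ↦ thetaTerm P x p.1 * thetaTerm Q y p.2 :=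
  summable_mul_of_summable_norm (summable_thetaTerm hP₀ hP hx).norm
    (summable_thetaTerm hQ₀ hQ hy).norm

theorem theta_mul_theta {P : ℂ} (hP₀ : P ≠ 0) (hP : ‖P‖ < 1) (hQ₀ : Q ≠ 0) (hQ : ‖Q‖ < 1)
    (hx : x ≠ 0) (hy : y ≠ 0) :
    theta P x * theta Q y = ∑' p : ℤ × ℤ, thetaTerm P x p.1 * thetaTerm Q y p.2 :=
  tsum_mul_tsum_of_summable_norm (summable_thetaTerm hP₀ hP hx).norm
    (summable_thetaTerm hQ₀ hQ hy).norm

theorem theta_mul_mul_theta_div (hQ₀ : Q ≠ 0) (hQ : ‖Q‖ < 1) (hx : x ≠ 0) (hy : y ≠ 0) :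
    theta Q (x * y) * theta Q (x / y) =
      theta (Q ^ 2) (-x ^ 2) * theta (Q ^ 2) (-(Q * y ^ 2)) -
        x / y * (theta (Q ^ 2) (-(Q * x ^ 2)) * theta (Q ^ 2) (-y ^ 2)) := by
  have hQ₀' : Q ^ 2 ≠ 0 := pow_ne_zero 2 hQ₀
  have hQ' : ‖Q ^ 2‖ < 1 := norm_pow_lt_one hQ two_ne_zero
  have even_ne {z : ℂ} (hz : z ≠ 0) : -z ^ 2 ≠ 0 := neg_ne_zero.2 (pow_ne_zero 2 hz)
  have odd_ne {z : ℂ} (hz : z ≠ 0) : -(Q * z ^ 2) ≠ 0 :=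
    neg_ne_zero.2 (mul_ne_zero hQ₀ (pow_ne_zero 2 hz))
  rw [theta_mul_theta hQ₀ hQ hQ₀ hQ (mul_ne_zero hx hy) (div_ne_zero hx hy),
    theta_mul_theta hQ₀' hQ' hQ₀' hQ' (even_ne hx) (odd_ne hy),
    theta_mul_theta hQ₀' hQ' hQ₀' hQ' (odd_ne hx) (even_ne hy),
    tsum_int_prod_eq_add (summable_thetaTerm_mul_thetaTerm hQ₀ hQ hQ₀ hQ (mul_ne_zero hx hy)
      (div_ne_zero hx hy)), sub_eq_add_neg, ← neg_mul (x / y), ← tsum_mul_left]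
  simp only [thetaTerm_mul_thetaTerm_even hQ₀ hx hy, thetaTerm_mul_thetaTerm_odd hQ₀ hx hy]

/-- With `a z = θ_{Q²}(-z²)` and `b z = z θ_{Q²}(-Q z²)`, the addition formula reads
`y θ_Q(xy) θ_Q(x/y) = a x * b y - a y * b x`, so this is the Plücker relation between `2 × 2`
minors. -/
theorem theta_three_term (hQ₀ : Q ≠ 0) (hQ : ‖Q‖ < 1) (hx : x ≠ 0) (hy : y ≠ 0) (hu : u ≠ 0)
    (hv : v ≠ 0) :
    y * (theta Q (x * y) * theta Q (x / y)) * (v * (theta Q (u * v) * theta Q (u / v))) -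
      u * (theta Q (x * u) * theta Q (x / u)) * (v * (theta Q (y * v) * theta Q (y / v))) +
      v * (theta Q (x * v) * theta Q (x / v)) * (u * (theta Q (y * u) * theta Q (y / u))) = 0 := by
  have minor {r s : ℂ} (hr : r ≠ 0) (hs : s ≠ 0) : s * (theta Q (r * s) * theta Q (r / s)) =
      theta (Q ^ 2) (-r ^ 2) * (s * theta (Q ^ 2) (-(Q * s ^ 2))) -
        theta (Q ^ 2) (-s ^ 2) * (r * theta (Q ^ 2) (-(Q * r ^ 2))) := by
    rw [theta_mul_mul_theta_div hQ₀ hQ hr hs]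
    field_simp
  rw [minor hx hy, minor hu hv, minor hx hu, minor hy hv, minor hx hv, minor hy hu]
  ring

theorem theta_inv (Q : ℂ) (hx : x ≠ 0) : theta Q x⁻¹ = -x⁻¹ * theta Q x := by
  rw [theta, theta, ← tsum_mul_left, ← (Equiv.subLeft (1 : ℤ)).tsum_eq]
  refine tsum_congr fun n ↦ ?_
  rw [Equiv.subLeft_apply, thetaTerm, thetaTerm, ← inv_neg, inv_zpow', neg_sub,
    zpow_sub_one₀ (neg_ne_zero.2 hx), show (1 - n) * (1 - n - 1) = n * (n - 1) by ring]
  ring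

end Weierstrass

section Lambert

variable {Q x y e s : ℂ}

/-- The general term of `lambertSeries`. -/
noncomputable def lambertTerm (Q x : ℂ) (n : ℕ) : ℂ := x * Q ^ n / (1 - x * Q ^ n) ^ 2

/-- The unilateral Lambert series `∑ x Qⁿ / (1 - x Qⁿ)²` over `n ≥ 0`. -/
noncomputable def lambertSeries (Q x : ℂ) : ℂ := ∑' n, lambertTerm Q x n

/-- The bilateral Lambert series `∑ x Qⁿ / (1 - x Qⁿ)²` over `n ∈ ℤ`, the negative indices being
folded onto `Q / x`. Up to an affine normalisation it is the Weierstrass `℘`-function in the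
multiplicative variable `x`. -/
noncomputable def bilateralLambert (Q x : ℂ) : ℂ := lambertSeries Q x + lambertSeries Q (Q / x)

/-- The product `∏ (1 + s x Qⁿ / (1 - x Qⁿ)²)`, which is `(x e; Q)_∞ (x / e; Q)_∞ / (x; Q)_∞²` for
`s = -(1 - e)² / e`. -/
noncomputable def lambertProd (Q x s : ℂ) : ℂ := ∏' n, (1 + s * lambertTerm Q x n)

theorem multipliable_one_add_mul {c : ℕ → ℂ} (hc : Summable fun n ↦ ‖c n‖) (s : ℂ) :
    Multipliable fun n ↦ 1 + s * c n :=
  multipliable_one_add_of_summable (by simpa using hc.mul_left ‖s‖)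

theorem hasDerivAt_tprod_one_add_mul {c : ℕ → ℂ} (hc : Summable fun n ↦ ‖c n‖) :
    HasDerivAt (fun s ↦ ∏' n, (1 + s * c n)) (∑' n, c n) 0 := by
  have mem_ball : (0 : ℂ) ∈ Metric.ball (0 : ℂ) 1 := Metric.mem_ball_self one_pos
  have mult : MultipliableLocallyUniformlyOn (fun n s ↦ 1 + s * c n) (Metric.ball (0 : ℂ) 1) := by
    refine ⟨_, hasProdLocallyUniformlyOn_of_forall_compact Metric.isOpen_ball
      fun K hK hcK ↦ hc.hasProdUniformlyOn_nat_one_add hcK (.of_forall fun n s hs ↦ ?_)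
        fun _ ↦ by fun_prop⟩
    rw [norm_mul]
    exact mul_le_of_le_one_left (norm_nonneg _) (mem_ball_zero_iff.1 (hK hs)).le
  have diff : DifferentiableOn ℂ (fun s ↦ ∏' n, (1 + s * c n)) (Metric.ball 0 1) :=
    mult.hasProdLocallyUniformlyOn.differentiableOn
      (.of_forall fun _ ↦ by
        simpa [Finset.prod_fn] using! DifferentiableOn.finsetProd fun _ _ ↦ by fun_prop)
      Metric.isOpen_ball
  have logDeriv_factor (n : ℕ) : logDeriv (fun s ↦ 1 + s * c n) 0 = c n := by
    have : HasDerivAt (fun s ↦ 1 + s * c n) (c n) 0 := by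
      simpa using ((hasDerivAt_id (0 : ℂ)).mul_const (c n)).const_add 1
    rw [logDeriv_apply, this.deriv, zero_mul, add_zero, div_one]
  have logDeriv_eq := logDeriv_tprod_eq_tsum Metric.isOpen_ball mem_ball
    (f := fun n s ↦ 1 + s * c n) (by simp) (by fun_prop)
    (by simpa only [logDeriv_factor] using hc.of_norm) mult (by simp)
  simp only [logDeriv_factor, logDeriv_apply, zero_mul, add_zero, tprod_one, div_one] at logDeriv_eq
  rw [← logDeriv_eq]
  exact (diff.differentiableAt (Metric.isOpen_ball.mem_nhds mem_ball)).hasDerivAt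

theorem summable_norm_lambertTerm (x : ℂ) (hQ : ‖Q‖ < 1) :
    Summable fun n ↦ ‖lambertTerm Q x n‖ := by
  have tendsto_zero : Tendsto (fun n : ℕ ↦ x * Q ^ n) atTop (𝓝 0) := by
    simpa using (tendsto_pow_atTop_nhds_zero_of_norm_lt_one hQ).const_mul x
  have tendsto_one : Tendsto (fun n : ℕ ↦ ((1 - x * Q ^ n) ^ 2)⁻¹) atTop (𝓝 1) := by
    simpa using ((tendsto_zero.const_sub 1).pow 2).inv₀ (by simp)
  obtain ⟨C, hC⟩ := (Metric.isBounded_range_of_tendsto _ tendsto_one).exists_norm_le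
  refine ((summable_norm_neg_mul_pow x hQ).mul_right C).of_nonneg_of_le
    (fun _ ↦ norm_nonneg _) fun n ↦ ?_
  rw [lambertTerm, div_eq_mul_inv, norm_mul, norm_neg]
  exact mul_le_mul_of_nonneg_left (hC _ ⟨n, rfl⟩) (norm_nonneg _)

theorem hasDerivAt_lambertProd (x : ℂ) (hQ : ‖Q‖ < 1) :
    HasDerivAt (lambertProd Q x) (lambertSeries Q x) 0 :=
  hasDerivAt_tprod_one_add_mul (summable_norm_lambertTerm x hQ)

theorem lambertProd_zero (Q x : ℂ) : lambertProd Q x 0 = 1 := by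
  simp only [lambertProd, zero_mul, add_zero, tprod_one]

theorem one_sub_mul_pow_ne_zero (hx : qPochhammerInf Q x ≠ 0) (n : ℕ) : 1 - x * Q ^ n ≠ 0 :=
  fun h ↦ hx (tprod_of_exists_eq_zero ⟨n, h⟩)

theorem qPochhammerInf_mul_mul_div (hQ : ‖Q‖ < 1) (hx : qPochhammerInf Q x ≠ 0) (he : e ≠ 0)
    (hs : s * e = -(1 - e) ^ 2) :
    qPochhammerInf Q (x * e) * qPochhammerInf Q (x / e) =
      qPochhammerInf Q x ^ 2 * lambertProd Q x s := by
  have mult (z : ℂ) := multipliable_one_sub_mul_pow z hQ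
  simp only [qPochhammerInf, lambertProd]
  rw [← (mult _).tprod_mul (mult _), ← (mult x).tprod_pow, ← ((mult x).pow 2).tprod_mul
    (multipliable_one_add_mul (summable_norm_lambertTerm x hQ) s)]
  refine tprod_congr fun n ↦ ?_
  have := one_sub_mul_pow_ne_zero hx n
  rw [lambertTerm, eq_div_of_mul_eq he hs]
  field_simp
  ring

theorem qPochhammerInf_eq_one_sub_mul (x : ℂ) (hQ : ‖Q‖ < 1) :
    qPochhammerInf Q x = (1 - x) * qPochhammerInf Q (x * Q) :=
  tendsto_nhds_unique ((tendsto_add_atTop_iff_nat 1).2 (tendsto_qPochhammer x hQ)) <| by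
    simpa only [qPochhammer_succ'] using (tendsto_qPochhammer (x * Q) hQ).const_mul (1 - x)

theorem theta_mul_mul_theta_div_eq_sq_mul (hQ₀ : Q ≠ 0) (hQ : ‖Q‖ < 1) (hx : x ≠ 0)
    (hθ : theta Q x ≠ 0) (he : e ≠ 0) (hs : s * e = -(1 - e) ^ 2) :
    theta Q (x * e) * theta Q (x / e) =
      theta Q x ^ 2 * (lambertProd Q x s * lambertProd Q (Q / x) s) := by
  rw [jacobi_triple_product hQ₀ hQ hx] at hθ ⊢
  have factors_ne := right_ne_zero_of_mul hθ
  have left := qPochhammerInf_mul_mul_div hQ (left_ne_zero_of_mul factors_ne) he hs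
  have right := qPochhammerInf_mul_mul_div hQ (right_ne_zero_of_mul factors_ne) he hs
  rw [jacobi_triple_product hQ₀ hQ (mul_ne_zero hx he),
    jacobi_triple_product hQ₀ hQ (div_ne_zero hx he), ← div_div, div_div_eq_mul_div,
    mul_div_right_comm]
  linear_combination
    eulerProd Q ^ 2 * (qPochhammerInf Q (Q / x * e) * qPochhammerInf Q (Q / x / e)) * left +
      eulerProd Q ^ 2 * qPochhammerInf Q x ^ 2 * lambertProd Q x s * right

theorem theta_eq_one_sub_mul_lambertProd (hQ₀ : Q ≠ 0) (hQ : ‖Q‖ < 1) (he : e ≠ 0)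
    (hs : s * e = -(1 - e) ^ 2) :
    theta Q e = (1 - e) * eulerProd Q ^ 3 * lambertProd Q Q s := by
  have pair := qPochhammerInf_mul_mul_div hQ
    (qPochhammerInf_self Q ▸ eulerProd_ne_zero hQ) he hs
  rw [qPochhammerInf_self] at pair
  rw [jacobi_triple_product hQ₀ hQ he, qPochhammerInf_eq_one_sub_mul e hQ, mul_comm e Q]
  linear_combination eulerProd Q * (1 - e) * pair

theorem exists_mul_eq_neg_one_sub_sq (s : ℂ) : ∃ e : ℂ, e ≠ 0 ∧ s * e = -(1 - e) ^ 2 := by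
  obtain ⟨r, hr⟩ := IsAlgClosed.exists_pow_nat_eq ((2 - s) ^ 2 - 4) two_pos
  have mul_conj : (2 - s + r) / 2 * ((2 - s - r) / 2) = 1 := by linear_combination -hr / 4
  exact ⟨(2 - s + r) / 2, left_ne_zero_of_mul_eq_one mul_conj, by linear_combination hr / 4⟩

/-- The three-term relation at `(x, y, e, 1)`, with `e` eliminated in favour of `s`, so that the
confluence `e → 1` becomes differentiation at `s = 0`. -/
theorem theta_mul_lambertProd (hQ₀ : Q ≠ 0) (hQ : ‖Q‖ < 1) (hx : x ≠ 0) (hy : y ≠ 0)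
    (hθx : theta Q x ≠ 0) (hθy : theta Q y ≠ 0) (s : ℂ) :
    -y * (theta Q (x * y) * theta Q (x / y)) * eulerProd Q ^ 6 * (s * lambertProd Q Q s ^ 2) =
      theta Q x ^ 2 * theta Q y ^ 2 *
        (lambertProd Q x s * lambertProd Q (Q / x) s -
          lambertProd Q y s * lambertProd Q (Q / y) s) := by
  obtain ⟨e, he, hs⟩ := exists_mul_eq_neg_one_sub_sq s
  have three_term := theta_three_term hQ₀ hQ hx hy he one_ne_zero
  simp only [mul_one, one_mul, div_one, theta_eq_one_sub_mul_lambertProd hQ₀ hQ he hs,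
    theta_mul_mul_theta_div_eq_sq_mul hQ₀ hQ hx hθx he hs,
    theta_mul_mul_theta_div_eq_sq_mul hQ₀ hQ hy hθy he hs] at three_term
  refine mul_left_cancel₀ he ?_
  linear_combination three_term -
    y * (theta Q (x * y) * theta Q (x / y)) * eulerProd Q ^ 6 * lambertProd Q Q s ^ 2 * hs

theorem theta_mul_mul_theta_div_eq_bilateralLambert_sub (hQ₀ : Q ≠ 0) (hQ : ‖Q‖ < 1)
    (hx : x ≠ 0) (hy : y ≠ 0) (hθx : theta Q x ≠ 0) (hθy : theta Q y ≠ 0) :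
    -y * (theta Q (x * y) * theta Q (x / y)) * eulerProd Q ^ 6 =
      theta Q x ^ 2 * theta Q y ^ 2 * (bilateralLambert Q x - bilateralLambert Q y) := by
  have deriv_prod (z : ℂ) := hasDerivAt_lambertProd z hQ
  have deriv_left := ((hasDerivAt_id (0 : ℂ)).mul ((deriv_prod Q).pow 2)).const_mul
    (-y * (theta Q (x * y) * theta Q (x / y)) * eulerProd Q ^ 6)
  have deriv_right := (((deriv_prod x).mul (deriv_prod (Q / x))).sub
    ((deriv_prod y).mul (deriv_prod (Q / y)))).const_mul (theta Q x ^ 2 * theta Q y ^ 2)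
  have deriv_eq := deriv_left.unique (deriv_right.congr_of_eventuallyEq
    (.of_forall (theta_mul_lambertProd hQ₀ hQ hx hy hθx hθy)))
  simpa [lambertProd_zero, bilateralLambert] using deriv_eq

end Lambert

section Dissection

@[to_additive]
theorem prod_range_mul_eq_prod_residue {M : Type*} [CommMonoid M] (f : ℕ → M) (n N : ℕ) :
    ∏ i ∈ range (n * N), f i = ∏ k ∈ range n, ∏ m ∈ range N, f (n * m + k) := by
  induction N with
  | zero => simp
  | succ N ih => simp only [mul_add_one, prod_range_add, prod_range_succ, prod_mul_distrib, ih]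

@[to_additive]
theorem tprod_eq_prod_tprod_residue {M : Type*} [CommMonoid M] [TopologicalSpace M]
    [ContinuousMul M] [T2Space M] {f : ℕ → M} {n : ℕ} (hn : n ≠ 0) (hf : Multipliable f)
    (hfk : ∀ k, Multipliable fun m ↦ f (n * m + k)) :
    ∏' i, f i = ∏ k ∈ range n, ∏' m, f (n * m + k) := by
  have multiples := hf.hasProd.tendsto_prod_nat.comp
    (tendsto_id.const_mul_atTop' (Nat.pos_of_ne_zero hn))
  simp only [Function.comp_def, id, prod_range_mul_eq_prod_residue] at multiples
  exact tendsto_nhds_unique multiples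
    (tendsto_finsetProd _ fun k _ ↦ (hfk k).hasProd.tendsto_prod_nat)

variable {q : ℂ} {n : ℕ}

theorem qPochhammerInf_eq_prod (x : ℂ) (hq : ‖q‖ < 1) (hn : n ≠ 0) :
    qPochhammerInf q x = ∏ k ∈ range n, qPochhammerInf (q ^ n) (x * q ^ k) := by
  have residue (k m : ℕ) : 1 - x * q ^ (n * m + k) = 1 - x * q ^ k * (q ^ n) ^ m := by ring
  rw [qPochhammerInf, tprod_eq_prod_tprod_residue hn (multipliable_one_sub_mul_pow x hq)] <;>
    simp only [residue]
  · rfl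
  · exact fun k ↦ multipliable_one_sub_mul_pow _ (norm_pow_lt_one hq hn)

theorem lambertSeries_eq_sum (x : ℂ) (hq : ‖q‖ < 1) (hn : n ≠ 0) :
    lambertSeries q x = ∑ k ∈ range n, lambertSeries (q ^ n) (x * q ^ k) := by
  have residue (k m : ℕ) : lambertTerm q x (n * m + k) = lambertTerm (q ^ n) (x * q ^ k) m := by
    rw [lambertTerm, lambertTerm, pow_add, pow_mul, mul_right_comm x, mul_assoc x]
  rw [lambertSeries, tsum_eq_sum_tsum_residue hn (summable_norm_lambertTerm x hq).of_norm] <;>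
    simp only [residue]
  · rfl
  · exact fun k ↦ (summable_norm_lambertTerm _ (norm_pow_lt_one hq hn)).of_norm

end Dissection

section RootsOfUnity

theorem prod_one_sub_pow_mul {R : Type*} [CommRing R] [IsDomain R] {ζ : R} {n : ℕ}
    (hζ : IsPrimitiveRoot ζ n) (hn : 0 < n) (u : R) :
    ∏ k ∈ range n, (1 - ζ ^ k * u) = 1 - u ^ n := by
  simpa [Polynomial.eval_prod] using
    (congrArg (Polynomial.eval 1) (X_pow_sub_C_eq_prod hζ hn (rfl : u ^ n = u ^ n))).symm

theorem sum_pow_mul_of_isPrimitiveRoot {R : Type*} [CommRing R] [IsDomain R] {ζ : R} {n : ℕ}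
    (hζ : IsPrimitiveRoot ζ n) (m : ℕ) :
    ∑ k ∈ range n, (ζ ^ k) ^ m = if n ∣ m then (n : R) else 0 := by
  simp only [← pow_mul, mul_comm _ m]
  simp only [pow_mul]
  split_ifs with h
  · simp [(hζ.pow_eq_one_iff_dvd m).2 h]
  · have ne_one : ζ ^ m - 1 ≠ 0 := sub_ne_zero.2 (mt (hζ.pow_eq_one_iff_dvd m).1 h)
    refine (mul_eq_zero.1 (geom_sum_mul (ζ ^ m) n ▸ ?_)).resolve_right ne_one
    rw [← pow_mul, mul_comm, pow_mul, hζ.pow_eq_one, one_pow, sub_self]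

variable {ζ Q x : ℂ} {n : ℕ}

theorem norm_pow_mul_of_isPrimitiveRoot (hζ : IsPrimitiveRoot ζ n) (hn : n ≠ 0) (k : ℕ) (u : ℂ) :
    ‖ζ ^ k * u‖ = ‖u‖ := by
  rw [norm_mul, norm_pow, hζ.norm'_eq_one hn, one_pow, one_mul]

theorem sum_div_one_sub_sq_of_isPrimitiveRoot (hζ : IsPrimitiveRoot ζ n) (hn : n ≠ 0) {u : ℂ}
    (hu : ‖u‖ < 1) :
    ∑ k ∈ range n, ζ ^ k * u / (1 - ζ ^ k * u) ^ 2 = n ^ 2 * (u ^ n / (1 - u ^ n) ^ 2) := by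
  have norm_lt (k : ℕ) : ‖ζ ^ k * u‖ < 1 := by rwa [norm_pow_mul_of_isPrimitiveRoot hζ hn]
  have summable (k : ℕ) : Summable fun m : ℕ ↦ (m : ℂ) * (ζ ^ k * u) ^ m := by
    simpa using summable_pow_mul_geometric_of_norm_lt_one 1 (norm_lt k)
  calc
    _ = ∑' m : ℕ, ∑ k ∈ range n, (m : ℂ) * (ζ ^ k * u) ^ m := by
      rw [Summable.tsum_finsetSum fun k _ ↦ summable k]
      exact sum_congr rfl fun k _ ↦ (tsum_coe_mul_geometric_of_norm_lt_one (norm_lt k)).symm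
    _ = ∑' m : ℕ, if n ∣ m then (n : ℂ) * (m * u ^ m) else 0 := by
      refine tsum_congr fun m ↦ ?_
      simp only [mul_pow, ← sum_mul, sum_pow_mul_of_isPrimitiveRoot hζ, ite_mul, zero_mul,
        mul_ite, mul_zero, mul_left_comm]
    _ = ∑' m : ℕ, (n : ℂ) ^ 2 * (m * (u ^ n) ^ m) := by
      rw [← (mul_right_injective₀ hn).tsum_eq (g := (n * ·))]
      · refine tsum_congr fun m ↦ ?_
        simp only [dvd_mul_right, if_true, pow_mul]
        push_cast
        ring
      · refine Function.support_subset_iff'.2 fun m hm ↦ if_neg ?_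
        rintro ⟨l, rfl⟩
        exact hm ⟨l, rfl⟩
    _ = _ := by rw [tsum_mul_left, tsum_coe_mul_geometric_of_norm_lt_one (norm_pow_lt_one hu hn)]

theorem prod_qPochhammerInf_of_isPrimitiveRoot (hζ : IsPrimitiveRoot ζ n) (hn : 0 < n)
    (hQ : ‖Q‖ < 1) (x : ℂ) :
    ∏ k ∈ range n, qPochhammerInf Q (ζ ^ k * x) = qPochhammerInf (Q ^ n) (x ^ n) := by
  simp only [qPochhammerInf]
  rw [← Multipliable.tprod_finsetProd fun k _ ↦ multipliable_one_sub_mul_pow _ hQ]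
  refine tprod_congr fun m ↦ ?_
  simp only [mul_assoc, prod_one_sub_pow_mul hζ hn]
  ring

theorem sum_lambertSeries_of_isPrimitiveRoot (hζ : IsPrimitiveRoot ζ n) (hn : n ≠ 0)
    (hQ : ‖Q‖ < 1) (hx : ‖x‖ < 1) :
    ∑ k ∈ range n, lambertSeries Q (ζ ^ k * x) = n ^ 2 * lambertSeries (Q ^ n) (x ^ n) := by
  simp only [lambertSeries]
  rw [← Summable.tsum_finsetSum fun k _ ↦ (summable_norm_lambertTerm _ hQ).of_norm, ← tsum_mul_left]
  refine tsum_congr fun m ↦ ?_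
  have norm_lt : ‖x * Q ^ m‖ < 1 := by
    rw [norm_mul, norm_pow]
    exact mul_lt_one_of_nonneg_of_lt_one_left (norm_nonneg x) hx (pow_le_one₀ (norm_nonneg Q) hQ.le)
  simp only [lambertTerm, mul_assoc, sum_div_one_sub_sq_of_isPrimitiveRoot hζ hn norm_lt]
  ring

theorem prod_theta_of_isPrimitiveRoot (hζ : IsPrimitiveRoot ζ n) (hn : 0 < n) (hQ₀ : Q ≠ 0)
    (hQ : ‖Q‖ < 1) (hx : x ≠ 0) :
    eulerProd (Q ^ n) * ∏ k ∈ range n, theta Q (ζ ^ k * x) =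
      eulerProd Q ^ n * theta (Q ^ n) (x ^ n) := by
  have ζ_ne : ζ ≠ 0 := hζ.ne_zero hn.ne'
  have reflect (k : ℕ) : Q / (ζ ^ k * x) = ζ⁻¹ ^ k * (Q / x) := by
    rw [inv_pow, ← div_div, div_eq_inv_mul Q, mul_div_assoc]
  rw [prod_congr rfl fun k _ ↦ jacobi_triple_product hQ₀ hQ (mul_ne_zero (pow_ne_zero k ζ_ne) hx),
    jacobi_triple_product (pow_ne_zero n hQ₀) (norm_pow_lt_one hQ hn.ne') (pow_ne_zero n hx)]
  simp only [reflect, prod_mul_distrib, prod_const, card_range,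
    prod_qPochhammerInf_of_isPrimitiveRoot hζ hn hQ,
    prod_qPochhammerInf_of_isPrimitiveRoot hζ.inv hn hQ, div_pow]
  ring

end RootsOfUnity

section Cubic

theorem div_eq_sq_mul_of_isPrimitiveRoot_three {K : Type*} [Field K] {ω : K}
    (hω : IsPrimitiveRoot ω 3) (u : K) : u / ω = ω ^ 2 * u := by
  rw [div_eq_iff (hω.ne_zero three_ne_zero)]
  linear_combination -u * hω.pow_eq_one

theorem one_sub_sq_of_isPrimitiveRoot_three {R : Type*} [CommRing R] [IsDomain R] {ω : R}
    (hω : IsPrimitiveRoot ω 3) : (1 - ω) ^ 2 = -3 * ω := by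
  have sum_eq_zero := hω.geom_sum_eq_zero (by norm_num)
  simp only [sum_range_succ, sum_range_zero, pow_zero, pow_one, zero_add] at sum_eq_zero
  linear_combination sum_eq_zero

variable {q Q ω : ℂ}

theorem theta_pow_three_self (hq₀ : q ≠ 0) (hq : ‖q‖ < 1) : theta (q ^ 3) q = eulerProd q := by
  rw [jacobi_triple_product (pow_ne_zero 3 hq₀) (norm_pow_lt_one hq three_ne_zero) hq₀,
    ← qPochhammerInf_self q, qPochhammerInf_eq_prod q hq three_ne_zero, ← qPochhammerInf_self]
  simp only [prod_range_succ, prod_range_zero, one_mul, pow_zero, mul_one, pow_one]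
  rw [show q ^ 3 / q = q * q by field_simp, show q * q ^ 2 = q ^ 3 by ring]
  ring

theorem bilateralLambert_pow_three_self (hq₀ : q ≠ 0) (hq : ‖q‖ < 1) :
    bilateralLambert (q ^ 3) q = lambertSeries q q - lambertSeries (q ^ 3) (q ^ 3) := by
  rw [bilateralLambert, lambertSeries_eq_sum q hq three_ne_zero]
  simp only [sum_range_succ, sum_range_zero, zero_add, pow_zero, mul_one, pow_one]
  rw [show q ^ 3 / q = q * q by field_simp, show q * q ^ 2 = q ^ 3 by ring]
  ring

theorem theta_of_isPrimitiveRoot_three (hω : IsPrimitiveRoot ω 3) (hQ₀ : Q ≠ 0)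
    (hQ : ‖Q‖ < 1) : theta Q ω = (1 - ω) * eulerProd (Q ^ 3) := by
  have roots := prod_qPochhammerInf_of_isPrimitiveRoot hω three_pos hQ Q
  simp only [prod_range_succ, prod_range_zero, one_mul, pow_zero, pow_one,
    qPochhammerInf_self] at roots
  rw [jacobi_triple_product hQ₀ hQ (hω.ne_zero three_ne_zero), qPochhammerInf_eq_one_sub_mul ω hQ,
    ← roots, div_eq_sq_mul_of_isPrimitiveRoot_three hω Q]
  ring

theorem lambertSeries_eq_add (x : ℂ) (hQ : ‖Q‖ < 1) :
    lambertSeries Q x = x / (1 - x) ^ 2 + lambertSeries Q (x * Q) := by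
  rw [lambertSeries, (summable_norm_lambertTerm x hQ).of_norm.tsum_eq_zero_add, lambertSeries]
  simp only [lambertTerm, pow_zero, mul_one, pow_succ', mul_assoc]

theorem bilateralLambert_of_isPrimitiveRoot_three (hω : IsPrimitiveRoot ω 3) (hQ : ‖Q‖ < 1) :
    bilateralLambert Q ω = -1 / 3 + 9 * lambertSeries (Q ^ 3) (Q ^ 3) - lambertSeries Q Q := by
  have ω_ne : ω ≠ 0 := hω.ne_zero three_ne_zero
  have roots := sum_lambertSeries_of_isPrimitiveRoot hω three_ne_zero hQ hQ
  simp only [sum_range_succ, sum_range_zero, zero_add, one_mul, pow_zero, pow_one] at roots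
  have leading : ω / (1 - ω) ^ 2 = -1 / 3 := by
    rw [one_sub_sq_of_isPrimitiveRoot_three hω]
    field_simp
  rw [bilateralLambert, lambertSeries_eq_add ω hQ, leading,
    div_eq_sq_mul_of_isPrimitiveRoot_three hω Q]
  push_cast at roots
  linear_combination roots

theorem theta_mul_mul_theta_div_of_isPrimitiveRoot_three (hω : IsPrimitiveRoot ω 3) (hq₀ : q ≠ 0)
    (hq : ‖q‖ < 1) :
    -q * (theta (q ^ 3) (ω * q) * theta (q ^ 3) (ω / q)) * (eulerProd q * eulerProd (q ^ 9)) =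
      ω * eulerProd (q ^ 3) ^ 4 := by
  have Q_ne : q ^ 3 ≠ 0 := pow_ne_zero 3 hq₀
  have Q_lt : ‖q ^ 3‖ < 1 := norm_pow_lt_one hq three_ne_zero
  have ω_ne : ω ≠ 0 := hω.ne_zero three_ne_zero
  have cube := prod_theta_of_isPrimitiveRoot hω three_pos Q_ne Q_lt hq₀
  simp only [prod_range_succ, prod_range_zero, one_mul, pow_zero, pow_one,
    theta_pow_three_self hq₀ hq, theta_pow_three_self Q_ne Q_lt] at cube
  rw [← pow_mul] at cube
  have reflect : theta (q ^ 3) (ω / q) = -(ω / q) * theta (q ^ 3) (ω ^ 2 * q) := by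
    rw [← div_eq_sq_mul_of_isPrimitiveRoot_three hω q, ← inv_div,
      theta_inv _ (div_ne_zero hq₀ ω_ne)]
  have cancel : q * (ω / q) = ω := mul_div_cancel₀ ω hq₀
  rw [reflect]
  linear_combination ω * cube + theta (q ^ 3) (ω * q) * theta (q ^ 3) (ω ^ 2 * q) *
    (eulerProd q * eulerProd (q ^ 9)) * cancel

theorem eisenstein_eq_eulerProd_quotient (hq : ‖q‖ < 1) :
    (1 + 3 * lambertSeries q q - 27 * lambertSeries (q ^ 9) (q ^ 9)) *
      (eulerProd q ^ 3 * eulerProd (q ^ 9) ^ 3) = eulerProd (q ^ 3) ^ 10 := by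
  rcases eq_or_ne q 0 with rfl | hq₀
  · simp [lambertSeries, lambertTerm, eulerProd]
  have Q_ne : q ^ 3 ≠ 0 := pow_ne_zero 3 hq₀
  have Q_lt : ‖q ^ 3‖ < 1 := norm_pow_lt_one hq three_ne_zero
  have hω := Complex.isPrimitiveRoot_exp 3 three_ne_zero
  set ω := Complex.exp (2 * π * Complex.I / (3 : ℕ))
  have ω_ne : ω ≠ 0 := hω.ne_zero three_ne_zero
  have theta_ω := theta_of_isPrimitiveRoot_three hω Q_ne Q_lt
  have theta_q := theta_pow_three_self hq₀ hq
  have one_sub_ω := one_sub_sq_of_isPrimitiveRoot_three hω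
  have weierstrass := theta_mul_mul_theta_div_eq_bilateralLambert_sub Q_ne Q_lt ω_ne hq₀
    (theta_ω ▸ mul_ne_zero (sub_ne_zero.2 (hω.ne_one (by norm_num)).symm)
      (eulerProd_ne_zero (norm_pow_lt_one Q_lt three_ne_zero)))
    (theta_q ▸ eulerProd_ne_zero hq)
  rw [theta_ω, theta_q, bilateralLambert_of_isPrimitiveRoot_three hω Q_lt,
    bilateralLambert_pow_three_self hq₀ hq, mul_pow, one_sub_ω, ← pow_mul] at weierstrass
  norm_num only at weierstrass
  have thetas := theta_mul_mul_theta_div_of_isPrimitiveRoot_three hω hq₀ hq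
  refine mul_left_cancel₀ ω_ne ?_
  linear_combination eulerProd (q ^ 3) ^ 6 * thetas -
    eulerProd q * eulerProd (q ^ 9) * weierstrass

end Cubic

section Derivative

variable {q : ℂ}

theorem tsum_succ_mul_pow_div_one_sub_eq_lambertSeries (hq : ‖q‖ < 1) :
    ∑' n : ℕ, (n + 1 : ℂ) * q ^ (n + 1) / (1 - q ^ (n + 1)) = lambertSeries q q := by
  have geometric (d : ℕ+) :
      ∑' c : ℕ+, (c : ℂ) ^ 1 * q ^ (d * c : ℕ) = q ^ (d : ℕ) / (1 - q ^ (d : ℕ)) ^ 2 := by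
    have norm_lt : ‖q ^ (d : ℕ)‖ < 1 := norm_pow_lt_one hq d.ne_zero
    rw [← tsum_coe_mul_geometric_of_norm_lt_one norm_lt, ← tsum_zero_pnat_eq_tsum_nat]
    · simp [pow_mul]
    · simpa using summable_pow_mul_geometric_of_norm_lt_one 1 norm_lt
  have swap := tsum_pow_div_one_sub_eq_tsum_sigma hq 1
  rw [← tsum_prod_pow_eq_tsum_sigma 1 hq] at swap
  simp only [geometric] at swap
  rw [tsum_pnat_eq_tsum_succ (f := fun n : ℕ ↦ (n : ℂ) ^ 1 * q ^ n / (1 - q ^ n)),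
    tsum_pnat_eq_tsum_succ (f := fun n : ℕ ↦ q ^ n / (1 - q ^ n) ^ 2)] at swap
  simp only [pow_one, Nat.cast_add, Nat.cast_one] at swap
  simp only [swap, lambertSeries, lambertTerm, ← pow_succ']

theorem differentiableOn_eulerProd : DifferentiableOn ℂ eulerProd (Metric.ball 0 1) :=
  ModularForm.differentiableOn_tprod_one_sub_pow

theorem differentiableAt_eulerProd (hq : ‖q‖ < 1) : DifferentiableAt ℂ eulerProd q :=
  differentiableOn_eulerProd.differentiableAt
    (Metric.isOpen_ball.mem_nhds (mem_ball_zero_iff.2 hq))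

theorem mul_logDeriv_one_sub_pow_succ (q : ℂ) (n : ℕ) :
    q * logDeriv (fun t : ℂ ↦ 1 - t ^ (n + 1)) q =
      -((n + 1 : ℂ) * q ^ (n + 1) / (1 - q ^ (n + 1))) := by
  have : HasDerivAt (fun t : ℂ ↦ 1 - t ^ (n + 1)) (-((n + 1 : ℕ) * q ^ n)) q := by
    simpa using (hasDerivAt_pow (n + 1) q).const_sub 1
  rw [logDeriv_apply, this.deriv]
  push_cast
  ring

theorem mul_deriv_eulerProd (hq : ‖q‖ < 1) :
    q * deriv eulerProd q = -lambertSeries q q * eulerProd q := by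
  rcases eq_or_ne q 0 with rfl | hq₀
  · simp [lambertSeries, lambertTerm]
  have logDeriv_factor (n : ℕ) : logDeriv (fun t : ℂ ↦ 1 - t ^ (n + 1)) q =
      -q⁻¹ * ((n + 1 : ℂ) * q ^ (n + 1) / (1 - q ^ (n + 1))) := by
    rw [neg_mul_comm, ← mul_logDeriv_one_sub_pow_succ, inv_mul_cancel_left₀ hq₀]
  have summable : Summable fun n : ℕ ↦ (n + 1 : ℂ) * q ^ (n + 1) / (1 - q ^ (n + 1)) := by
    have all_terms := summable_norm_pow_mul_geometric_div_one_sub 1 hq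
    have tail_terms := (summable_nat_add_iff 1).2 all_terms
    simpa only [pow_one, Nat.cast_add, Nat.cast_one] using tail_terms
  have logDeriv_eq : logDeriv eulerProd q = _ :=
    logDeriv_tprod_eq_tsum Metric.isOpen_ball (mem_ball_zero_iff.2 hq)
      (f := fun n t ↦ 1 - t ^ (n + 1))
      (fun n ↦ one_sub_ne_zero_of_norm_lt_one (norm_pow_lt_one hq n.succ_ne_zero)) (by fun_prop)
      (by simpa only [logDeriv_factor] using summable.mul_left _)
      ModularForm.multipliableLocallyUniformlyOn_one_sub_pow (eulerProd_ne_zero hq)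
  simp only [logDeriv_factor, tsum_mul_left] at logDeriv_eq
  rw [tsum_succ_mul_pow_div_one_sub_eq_lambertSeries hq, logDeriv_apply,
    div_eq_iff (eulerProd_ne_zero hq)] at logDeriv_eq
  rw [logDeriv_eq]
  field_simp

theorem hasDerivAt_mul_eulerProd_div (hq : ‖q‖ < 1) :
    HasDerivAt (fun t ↦ t * (eulerProd (t ^ 9) ^ 3 / eulerProd t ^ 3))
      (eulerProd (q ^ 3) ^ 10 / eulerProd q ^ 6) q := by
  have hq₉ := norm_pow_lt_one hq (n := 9) (by norm_num)
  have deriv_num : HasDerivAt (fun t ↦ eulerProd (t ^ 9))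
      (deriv eulerProd (q ^ 9) * ((9 : ℕ) * q ^ 8)) q :=
    HasDerivAt.comp (h₂ := eulerProd) (h := (· ^ 9)) q
      (differentiableAt_eulerProd hq₉).hasDerivAt (hasDerivAt_pow 9 q)
  have deriv_den := (differentiableAt_eulerProd hq).hasDerivAt
  have ne_zero := eulerProd_ne_zero hq
  refine ((hasDerivAt_id q).mul
    ((deriv_num.pow 3).div (deriv_den.pow 3) (pow_ne_zero 3 ne_zero))).congr_deriv ?_
  rw [← eisenstein_eq_eulerProd_quotient hq]
  simp only [id, Pi.pow_apply, Pi.div_apply]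
  field_simp
  push_cast
  linear_combination
    27 * eulerProd q ^ 3 * eulerProd (q ^ 9) ^ 2 * mul_deriv_eulerProd hq₉ -
      3 * eulerProd q ^ 2 * eulerProd (q ^ 9) ^ 3 * mul_deriv_eulerProd hq

end Derivative

section RealProducts

variable {t q : ℝ}

theorem tprod_one_sub_pow_div_eq_re (ht : |t| < 1) {a : ℕ} (ha : a ≠ 0) (m k : ℕ) :
    ∏' n : ℕ, (1 - t ^ (a * (n + 1))) ^ m / (1 - t ^ (n + 1)) ^ k =
      (eulerProd ((t : ℂ) ^ a) ^ m / eulerProd t ^ k).re := by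
  have ht' : ‖(t : ℂ)‖ < 1 := by simpa using ht
  have numerator := (ModularForm.multipliable_one_sub_pow (norm_pow_lt_one ht' ha)).hasProd.pow m
  have denominator := (ModularForm.multipliable_one_sub_pow ht').hasProd.pow k
  have quotient := (Complex.continuous_re.tendsto _).comp
    (Tendsto.div numerator denominator (pow_ne_zero k (eulerProd_ne_zero ht')))
  refine HasProd.tprod_eq (quotient.congr fun s ↦ ?_)
  simp only [Function.comp_apply, Pi.div_apply, ← prod_div_distrib, ← pow_mul]
  exact_mod_cast Complex.ofReal_re _

theorem U5_eq_re (ht : |t| < 1) : U5 t = (eulerProd ((t : ℂ) ^ 3) ^ 10 / eulerProd t ^ 6).re :=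
  tprod_one_sub_pow_div_eq_re ht three_ne_zero 10 6

theorem V5_eq_re (ht : |t| < 1) :
    V5 t = (t * (eulerProd ((t : ℂ) ^ 9) ^ 3 / eulerProd t ^ 3)).re := by
  rw [V5, tprod_one_sub_pow_div_eq_re ht (by norm_num) 3 3, Complex.re_ofReal_mul]

theorem hasDerivAt_V5 (ht : |t| < 1) : HasDerivAt V5 (U5 t) t := by
  rw [U5_eq_re ht]
  refine (hasDerivAt_mul_eulerProd_div (by simpa using ht)).real_of_complex.congr_of_eventuallyEq ?_
  filter_upwards [(isOpen_lt continuous_abs continuous_const).mem_nhds ht] with s hs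
  exact V5_eq_re hs

theorem continuousAt_U5 (ht : |t| < 1) : ContinuousAt U5 t := by
  have ht' : ‖(t : ℂ)‖ < 1 := by simpa using ht
  have cont {a : ℕ} (ha : a ≠ 0) : ContinuousAt (fun s : ℝ ↦ eulerProd ((s : ℂ) ^ a)) t :=
    (differentiableAt_eulerProd (norm_pow_lt_one ht' ha)).continuousAt.comp
      (f := fun s : ℝ ↦ (s : ℂ) ^ a) (by fun_prop)
  have quotient := ((cont three_ne_zero).pow 10).div ((cont one_ne_zero).pow 6)
    (by simpa using eulerProd_ne_zero ht')
  simp only [pow_one] at quotient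
  refine (Complex.continuous_re.continuousAt.comp quotient).congr ?_
  filter_upwards [(isOpen_lt continuous_abs continuous_const).mem_nhds ht] with s hs
  exact (U5_eq_re hs).symm

theorem integral_U5 (hq : |q| < 1) : ∫ t in (0 : ℝ)..q, U5 t = V5 q := by
  have abs_lt {t : ℝ} (ht : t ∈ Set.uIcc 0 q) : |t| < 1 := by
    simpa using (Set.abs_sub_left_of_mem_uIcc ht).trans_lt (by simpa using hq)
  rw [intervalIntegral.integral_eq_sub_of_hasDerivAt fun t ht ↦ hasDerivAt_V5 (abs_lt ht)]
  · simp [V5]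
  · exact ContinuousOn.intervalIntegrable fun t ht ↦
      (continuousAt_U5 (abs_lt ht)).continuousWithinAt

end RealProducts

section SpecialValue

open ModularForm (eta)

variable {y : ℝ}

theorem eta_ofReal_mul_I (y : ℝ) :
    eta (y * Complex.I) =
      Complex.exp (-2 * π * y / 24) * eulerProd (Complex.exp (-2 * π * y)) := by
  have exponent : 2 * π * Complex.I * (y * Complex.I) = -2 * π * y := by
    linear_combination 2 * π * y * Complex.I_mul_I
  simp only [eta, ModularForm.eta_q_eq_pow, Function.Periodic.qParam, exponent, eulerProd]
  norm_num

theorem sqrt_ofReal_mul (hy : 0 < y) {z : ℂ} (hz : z ≠ 0) :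
    Complex.sqrt (y * z) = √y * Complex.sqrt z := by
  rw [_root_.sqrt_eq_exp (mul_ne_zero (Complex.ofReal_ne_zero.2 hy.ne') hz),
    _root_.sqrt_eq_exp hz, Complex.log_ofReal_mul hy hz, Real.sqrt_eq_rpow,
    Real.rpow_def_of_pos hy, Complex.ofReal_exp, ← Complex.exp_add]
  push_cast
  ring_nf

theorem ofReal_mul_I_mem_upperHalfPlaneSet (hy : 0 < y) :
    (y * Complex.I : ℂ) ∈ UpperHalfPlane.upperHalfPlaneSet := by
  simpa [UpperHalfPlane.upperHalfPlaneSet] using hy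

theorem eta_inv_mul_I (hy : 0 < y) :
    eta ((y⁻¹ : ℝ) * Complex.I) = √y * eta (y * Complex.I) := by
  have sqrt_I_ne_zero : Complex.sqrt Complex.I ≠ 0 := by
    rw [_root_.sqrt_eq_exp Complex.I_ne_zero]
    exact Complex.exp_ne_zero _
  have inversion := ModularForm.eta_comp_eq_csqrt_I_inv (ofReal_mul_I_mem_upperHalfPlaneSet hy)
  have neg_one_div : -1 / (y * Complex.I) = (y⁻¹ : ℝ) * Complex.I := by
    rw [← div_div, div_eq_mul_inv _ Complex.I, Complex.inv_I, Complex.ofReal_inv]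
    ring
  simp only [Function.comp_apply, Pi.smul_apply, Pi.mul_apply, smul_eq_mul, neg_one_div,
    sqrt_ofReal_mul hy Complex.I_ne_zero] at inversion
  rw [inversion]
  field_simp

theorem V5_exp_neg_two_pi_mul (hy : 0 < y) :
    V5 (Real.exp (-2 * π * y)) =
      ((eta ((9 * y : ℝ) * Complex.I) / eta (y * Complex.I)) ^ 3).re := by
  have lt_one : |Real.exp (-2 * π * y)| < 1 := by
    rw [abs_of_pos (Real.exp_pos _), Real.exp_lt_one_iff]
    linarith [mul_pos pi_pos hy]
  have nome : Complex.exp (-2 * π * (9 * y : ℝ)) = Complex.exp (-2 * π * y) ^ 9 := by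
    rw [← Complex.exp_nat_mul]
    push_cast
    ring_nf
  have prefactor : Complex.exp (-2 * π * (9 * y : ℝ) / 24) ^ 3 =
      Complex.exp (-2 * π * y) * Complex.exp (-2 * π * y / 24) ^ 3 := by
    simp only [← Complex.exp_nat_mul, ← Complex.exp_add]
    push_cast
    ring_nf
  rw [V5_eq_re lt_one, eta_ofReal_mul_I, eta_ofReal_mul_I, nome, div_pow, mul_pow, mul_pow,
    prefactor]
  congr 1
  push_cast
  field_simp

theorem V5_exp_neg_two_pi_div_three : V5 (Real.exp (-2 * π / 3)) = 1 / (3 * √3) := by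
  have ratio : eta ((9 * 3⁻¹ : ℝ) * Complex.I) / eta ((3⁻¹ : ℝ) * Complex.I) = ((√3)⁻¹ : ℝ) := by
    have ne_zero := ModularForm.eta_ne_zero (ofReal_mul_I_mem_upperHalfPlaneSet three_pos)
    rw [eta_inv_mul_I three_pos, show (9 * 3⁻¹ : ℝ) = 3 by norm_num, Complex.ofReal_inv,
      div_mul_cancel_right₀ ne_zero]
  rw [div_eq_mul_inv _ 3, V5_exp_neg_two_pi_mul (by norm_num), ratio, ← Complex.ofReal_pow,
    Complex.ofReal_re, inv_pow, pow_succ, Real.sq_sqrt zero_le_three, one_div]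

end SpecialValue

theorem stmt_5_general :
    (∀ q : ℝ, |q| < 1 → (∫ t in (0:ℝ)..q, U5 t) = V5 q) ∧
    V5 (Real.exp (-2 * Real.pi / 3)) = 1 / (3 * Real.sqrt 3) :=
  ⟨fun _ ↦ integral_U5, V5_exp_neg_two_pi_div_three⟩

theorem stmt_5 :
    (∀ q : ℝ, 0 < q → q < 1 → (∫ t in (0:ℝ)..q, U5 t) = V5 q) ∧
    V5 (Real.exp (-2 * Real.pi / 3)) = 1 / (3 * Real.sqrt 3) :=
  ⟨fun q hq₀ hq ↦ stmt_5_general.1 q (abs_lt.2 ⟨by linarith, hq⟩), stmt_5_general.2⟩
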